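/- arXiv:2107.14126 — 8 statements merged into one kernel-verified Lean document; each statement's English description precedes it below -/
import Mathlib

section
/- For every n ≥ 1, the path graph on n vertices has a growth schedule (with edge-activation distance d = 2) of ⌈log₂ n⌉ slots that uses at most n − 1 excess edges. -/
/-!
Let `k = ⌈log₂ n⌉` and number the vertices of the path `0, …, n - 1`. After slot `t` the grown
graph is the path through the multiples of `2 ^ (k - t)` below `n`: for `t = 0` this is the
vertex `0` alone because `n ≤ 2 ^ k`, and for `t = k` it is the whole path. In slot `t + 1`, with
`s = 2 ^ (k - (t + 1))`, every old vertex `a` (a multiple of `2 * s`) generates `a + s` if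
`a + s < n`, and `a + s` is also joined to `a + 2 * s`, a neighbour of `a`, if `a + 2 * s < n`.
The edge between `a` and `a + 2 * s` is then deleted.

Each deleted edge is thus charged to its midpoint, a vertex generated in that very slot. Since every
vertex but `0` is generated exactly once, at most `n - 1` edges are deleted
(`ncard_deleted_le`). The slots are counted by `slot`, and `slot_le_iff` and `slot_eq_succ_iff`
translate everything into divisibility by powers of two.
-/


open SimpleGraph

/-- A growth schedule of `k` slots for target graph `G`, with edge-activation
distance `d`.  `born v` is the slot in which `v` is generated (the initiator has
`born = 0`), `parent v` is the vertex for which `v` was generated, `graph t` is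
the graph grown at the end of slot `t` (after edge deletions) and `mid t` is the
intermediate graph of slot `t` after vertex generations and edge activations but
before edge deletions. -/
structure GrowthSchedule {V : Type*} [Fintype V] [DecidableEq V]
    (G : SimpleGraph V) (d : ℕ) (k : ℕ) where
  born : V → ℕ
  parent : V → V
  graph : ℕ → SimpleGraph V
  mid : ℕ → SimpleGraph V
  born_le : ∀ v, born v ≤ k
  init_unique : ∃! v, born v = 0
  parent_born : ∀ v, born v ≠ 0 → born (parent v) < born v
  parent_inj : ∀ v w, born v ≠ 0 → born v = born w → parent v = parent w → v = w
  graph_zero : graph 0 = ⊥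
  graph_final : graph k = G
  keep_le_mid : ∀ t, graph t ≤ mid (t + 1)
  parent_edge : ∀ v, born v ≠ 0 → (mid (born v)).Adj v (parent v)
  new_edges : ∀ t v w, (mid (t + 1)).Adj v w → ¬ (graph t).Adj v w →
    (born v = t + 1 ∧ born w ≤ t ∧
      (w = parent v ∨ ((graph t).Reachable (parent v) w ∧
        (graph t).dist (parent v) w ≤ d - 1))) ∨
    (born w = t + 1 ∧ born v ≤ t ∧
      (v = parent w ∨ ((graph t).Reachable (parent w) v ∧
        (graph t).dist (parent w) v ≤ d - 1)))
  graph_le_mid : ∀ t, graph (t + 1) ≤ mid (t + 1)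
  connected : ∀ t v w, born v ≤ t → born w ≤ t → (graph t).Reachable v w

/-- The total number of excess (i.e. deleted) edges of a growth schedule. -/
noncomputable def GrowthSchedule.excess {V : Type*} [Fintype V] [DecidableEq V]
    {G : SimpleGraph V} {d k : ℕ} (S : GrowthSchedule G d k) : ℕ :=
  ∑ t ∈ Finset.range k, ((S.mid (t + 1)).edgeSet \ (S.graph (t + 1)).edgeSet).ncard

/-- The star graph on `n` vertices: vertex `0` is the center, adjacent to all others. -/
def starGraph (n : ℕ) : SimpleGraph (Fin n) :=
  SimpleGraph.fromRel (fun u _ => u.val = 0)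

/-- The slot in which vertex `v` is generated in a schedule of `k` slots: the least `t` for which
`2 ^ (k - t)` divides `v`. -/
def slot (k v : ℕ) : ℕ :=
  Nat.find (⟨k, by simp⟩ : ∃ t, 2 ^ (k - t) ∣ v)

lemma slot_le_iff (k v t : ℕ) : slot k v ≤ t ↔ 2 ^ (k - t) ∣ v := by
  constructor
  · intro h
    exact (pow_dvd_pow 2 (by omega : k - t ≤ k - slot k v)).trans
      (Nat.find_spec (⟨k, by simp⟩ : ∃ t, 2 ^ (k - t) ∣ v))
  · intro h
    exact Nat.find_min' _ h

lemma step_eq {k t : ℕ} (h : t < k) : 2 ^ (k - t) = 2 * 2 ^ (k - (t + 1)) := by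
  rw [← pow_succ']
  congr 1
  omega

/-- The vertices generated in slot `t + 1` are the odd multiples of `2 ^ (k - (t + 1))`. -/
lemma slot_eq_succ_iff (k v t : ℕ) :
    slot k v = t + 1 ↔ t < k ∧ ∃ j, v = (2 * j + 1) * 2 ^ (k - (t + 1)) := by
  have h1 := slot_le_iff k v t
  have h2 := slot_le_iff k v (t + 1)
  have hs : 0 < 2 ^ (k - (t + 1)) := by positivity
  constructor
  · intro h
    have htk : t < k := by
      by_contra hc
      have : slot k v ≤ t := h1.2 (by simp [Nat.sub_eq_zero_of_le (not_lt.1 hc)])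
      omega
    refine ⟨htk, ?_⟩
    obtain ⟨c, hc⟩ := h2.1 h.le
    have hn : ¬ 2 ^ (k - t) ∣ v := fun h' => by have := h1.2 h'; omega
    rw [step_eq htk] at hn
    rcases Nat.even_or_odd' c with ⟨j, rfl | rfl⟩
    · exact absurd ⟨j, by rw [hc]; ring⟩ hn
    · exact ⟨j, by rw [hc]; ring⟩
  · rintro ⟨htk, j, hj⟩
    have hle : slot k v ≤ t + 1 := h2.2 ⟨2 * j + 1, by rw [hj]; ring⟩
    have hn : ¬ slot k v ≤ t := by
      rw [h1, step_eq htk, hj, Nat.mul_dvd_mul_iff_right hs]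
      omega
    omega

lemma slot_eq_zero_iff {n k v : ℕ} (h : n ≤ 2 ^ k) (hv : v < n) : slot k v = 0 ↔ v = 0 := by
  rw [← Nat.le_zero, slot_le_iff]
  constructor
  · intro hd
    exact Nat.eq_zero_of_dvd_of_lt hd (by simpa using hv.trans_le h)
  · rintro rfl
    simp

/-- The graph at the end of slot `t`: the path through the multiples of `2 ^ (k - t)` below `n`.
The remaining elements of `Fin n`, not yet generated, are isolated. -/
def slotGraph (n k t : ℕ) : SimpleGraph (Fin n) where
  Adj v w := 2 ^ (k - t) ∣ v.val ∧
    (v.val + 2 ^ (k - t) = w.val ∨ w.val + 2 ^ (k - t) = v.val)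
  symm := ⟨by
    rintro v w ⟨hd, h⟩
    refine ⟨?_, h.symm⟩
    rcases h with h | h
    · rw [← h]
      exact hd.add dvd_rfl
    · rw [← h] at hd
      exact (Nat.dvd_add_left dvd_rfl).1 hd⟩
  loopless := ⟨by
    rintro v ⟨-, h⟩
    have : 0 < 2 ^ (k - t) := by positivity
    omega⟩

lemma slotGraph_reachable_zero {n k t : ℕ} (hn : 0 < n) (c : ℕ) (h : c * 2 ^ (k - t) < n) :
    (slotGraph n k t).Reachable ⟨0, hn⟩ ⟨c * 2 ^ (k - t), h⟩ := by
  induction c with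
  | zero => simp
  | succ c ih =>
    have hlt : c * 2 ^ (k - t) < n := lt_of_le_of_lt (Nat.mul_le_mul_right _ (by omega)) h
    refine (ih hlt).trans (SimpleGraph.Adj.reachable ?_)
    exact ⟨Dvd.intro_left c rfl, Or.inl (by simp only; ring)⟩

/-- The vertex for which `v` is generated: the last vertex preceding `v` on the path at that time.
Its value at the initiator `0` is the junk value `0`. -/
def slotParent {n : ℕ} (k : ℕ) (v : Fin n) : Fin n :=
  ⟨v.val - 2 ^ (k - slot k v.val), lt_of_le_of_lt (Nat.sub_le _ _) v.isLt⟩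

lemma slotParent_of_slot {n k t : ℕ} {v : Fin n} (h : slot k v.val = t + 1) :
    t < k ∧ ∃ j, v.val = (2 * j + 1) * 2 ^ (k - (t + 1)) ∧
      (slotParent k v).val = j * 2 ^ (k - t) := by
  obtain ⟨htk, j, hj⟩ := (slot_eq_succ_iff _ _ _).1 h
  refine ⟨htk, j, hj, ?_⟩
  simp only [slotParent, h]
  rw [step_eq htk, hj, Nat.sub_eq_iff_eq_add (Nat.le_mul_of_pos_left _ (by omega))]
  ring

lemma slotParent_add {n k t : ℕ} {v : Fin n} (h : slot k v.val = t + 1) :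
    (slotParent k v).val + 2 ^ (k - (t + 1)) = v.val := by
  obtain ⟨htk, j, hj, hp⟩ := slotParent_of_slot h
  rw [hp, hj, step_eq htk]
  ring

/-- An edge that runs rightwards from `v` to `w` and is present after slot `t + 1` but not after
slot `t` joins an old vertex to a new one, at distance at most one from the parent of the new
vertex. -/
lemma new_edge {n k t : ℕ} {v w : Fin n} (hd : 2 ^ (k - (t + 1)) ∣ v.val)
    (h : v.val + 2 ^ (k - (t + 1)) = w.val) (hnot : ¬ (slotGraph n k t).Adj v w) :
    (slot k v.val = t + 1 ∧ slot k w.val ≤ t ∧ (slotGraph n k t).Adj (slotParent k v) w) ∨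
      (slot k w.val = t + 1 ∧ slot k v.val ≤ t ∧ v = slotParent k w) := by
  have htk : t < k := by
    by_contra hc
    refine hnot ?_
    rw [show k - (t + 1) = 0 by omega] at h
    exact ⟨by simp [show k - t = 0 by omega], Or.inl (by rwa [show k - t = 0 by omega])⟩
  obtain ⟨c, hc⟩ := hd
  rcases Nat.even_or_odd' c with ⟨j, rfl | rfl⟩
  · right
    have hw : slot k w.val = t + 1 := (slot_eq_succ_iff _ _ _).2 ⟨htk, j, by rw [← h, hc]; ring⟩
    refine ⟨hw, (slot_le_iff _ _ _).2 ⟨j, by rw [hc, step_eq htk]; ring⟩, ?_⟩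
    have := slotParent_add hw
    apply Fin.ext
    omega
  · left
    have hv : slot k v.val = t + 1 := (slot_eq_succ_iff _ _ _).2 ⟨htk, j, by rw [hc]; ring⟩
    have hw : 2 ^ (k - t) ∣ w.val := ⟨j + 1, by rw [← h, hc, step_eq htk]; ring⟩
    refine ⟨hv, (slot_le_iff _ _ _).2 hw, SimpleGraph.Adj.symm ⟨hw, Or.inr ?_⟩⟩
    have := slotParent_add hv
    rw [step_eq htk]
    omega

lemma reachable_and_dist_le_one {V : Type*} {G : SimpleGraph V} {v w : V} (h : G.Adj v w) :
    G.Reachable v w ∧ G.dist v w ≤ 2 - 1 :=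
  ⟨h.reachable, (SimpleGraph.dist_eq_one_iff_adj.2 h).le⟩

/-- The schedule that subdivides every edge of the current path in each slot. The intermediate
graph contains the edges of both paths, before and after the slot; its value at `0` is unused. -/
def pathSchedule (n k : ℕ) (hn : 1 ≤ n) (hk : n ≤ 2 ^ k) :
    GrowthSchedule (SimpleGraph.pathGraph n) 2 k where
  born v := slot k v.val
  parent := slotParent k
  graph := slotGraph n k
  mid t := slotGraph n k (t - 1) ⊔ slotGraph n k t
  born_le v := (slot_le_iff _ _ _).2 (by simp)
  init_unique := by
    refine ⟨⟨0, hn⟩, (slot_eq_zero_iff hk hn).2 rfl, fun v hv => ?_⟩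
    exact Fin.ext ((slot_eq_zero_iff hk v.isLt).1 hv)
  parent_born v hv := by
    obtain ⟨t, ht⟩ := Nat.exists_eq_succ_of_ne_zero hv
    obtain ⟨htk, j, hj, hp⟩ := slotParent_of_slot ht
    have : slot k (slotParent k v).val ≤ t := (slot_le_iff _ _ _).2 ⟨j, by rw [hp]; ring⟩
    omega
  parent_inj v w hv hvw hp := by
    obtain ⟨t, ht⟩ := Nat.exists_eq_succ_of_ne_zero hv
    apply Fin.ext
    rw [← slotParent_add ht, ← slotParent_add (hvw.symm.trans ht), hp]
  graph_zero := by
    ext v w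
    simp only [slotGraph, SimpleGraph.bot_adj, iff_false, Nat.sub_zero]
    have := v.isLt
    have := w.isLt
    omega
  graph_final := by
    ext v w
    simp [slotGraph, SimpleGraph.pathGraph_adj]
  keep_le_mid t := le_sup_left
  parent_edge v hv := by
    obtain ⟨t, ht⟩ := Nat.exists_eq_succ_of_ne_zero hv
    refine Or.inr ⟨(slot_le_iff _ _ _).1 le_rfl, Or.inr ?_⟩
    rw [ht]
    exact slotParent_add ht
  new_edges t v w hadj hnot := by
    rcases hadj with hadj | ⟨hd, hadj⟩
    · exact absurd hadj hnot
    rcases hadj with h | h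
    · rcases new_edge hd h hnot with ⟨h1, h2, h3⟩ | ⟨h1, h2, h3⟩
      · exact Or.inl ⟨h1, h2, Or.inr (reachable_and_dist_le_one h3)⟩
      · exact Or.inr ⟨h1, h2, Or.inl h3⟩
    · have hd' : 2 ^ (k - (t + 1)) ∣ w.val := by
        rw [← h] at hd
        exact (Nat.dvd_add_left dvd_rfl).1 hd
      rcases new_edge hd' h (fun h' => hnot h'.symm) with ⟨h1, h2, h3⟩ | ⟨h1, h2, h3⟩
      · exact Or.inr ⟨h1, h2, Or.inr (reachable_and_dist_le_one h3)⟩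
      · exact Or.inl ⟨h1, h2, Or.inl h3⟩
  graph_le_mid t := le_sup_right
  connected t v w hv hw := by
    have key : ∀ u : Fin n, slot k u.val ≤ t → (slotGraph n k t).Reachable ⟨0, hn⟩ u := by
      intro u hu
      obtain ⟨c, hc⟩ := (slot_le_iff _ _ _).1 hu
      rw [mul_comm] at hc
      have hr := slotGraph_reachable_zero (k := k) (t := t) hn c (by rw [← hc]; exact u.isLt)
      have he : u = ⟨c * 2 ^ (k - t), by rw [← hc]; exact u.isLt⟩ := Fin.ext hc
      rwa [he]
    exact (key v hv).symm.trans (key w hw)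

/-- The edges deleted in slot `t + 1` are at most as many as the vertices generated in it, since
distinct deleted edges have distinct midpoints and these are new. -/
lemma ncard_deleted_le (n k t : ℕ) (htk : t < k) :
    ((slotGraph n k t ⊔ slotGraph n k (t + 1)).edgeSet \ (slotGraph n k (t + 1)).edgeSet).ncard ≤
      (Finset.univ.filter fun v : Fin n => slot k v.val = t + 1).card := by
  classical
  -- The edge with midpoint `v`; the reduction mod `n` is vacuous for actual midpoints.
  let e : Fin n → Sym2 (Fin n) := fun v =>
    s(slotParent k v, ⟨(v.val + 2 ^ (k - (t + 1))) % n, Nat.mod_lt _ v.pos⟩)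
  have hmid : ∀ a b : Fin n, 2 ^ (k - t) ∣ a.val → a.val + 2 ^ (k - t) = b.val →
      ∃ v : Fin n, slot k v.val = t + 1 ∧ e v = s(a, b) := by
    intro a b hd hab
    rw [step_eq htk] at hab hd
    have hb := b.isLt
    refine ⟨⟨a.val + 2 ^ (k - (t + 1)), by omega⟩, ?_⟩
    obtain ⟨j, hj⟩ := hd
    have hs : slot k (a.val + 2 ^ (k - (t + 1))) = t + 1 :=
      (slot_eq_succ_iff _ _ _).2 ⟨htk, j, by rw [hj]; ring⟩
    refine ⟨hs, ?_⟩
    have h1 : slotParent k (⟨a.val + 2 ^ (k - (t + 1)), by omega⟩ : Fin n) = a := by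
      have := slotParent_add (v := (⟨a.val + 2 ^ (k - (t + 1)), by omega⟩ : Fin n)) hs
      apply Fin.ext
      simp only at this
      omega
    have h2 : (⟨(a.val + 2 ^ (k - (t + 1)) + 2 ^ (k - (t + 1))) % n, Nat.mod_lt _ a.pos⟩ : Fin n)
        = b := by
      apply Fin.ext
      simp only
      rw [Nat.mod_eq_of_lt] <;> omega
    simp only [e, h1, h2]
  have hsub : (slotGraph n k t ⊔ slotGraph n k (t + 1)).edgeSet \ (slotGraph n k (t + 1)).edgeSet ⊆
      ((Finset.univ.filter fun v : Fin n => slot k v.val = t + 1).image e : Finset _) := by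
    intro x
    induction x using Sym2.ind with
    | _ a b =>
      rintro ⟨h1 | h1, h2⟩
      · simp only [Finset.coe_image, Finset.coe_filter, Finset.mem_univ, true_and, Set.mem_image,
          Set.mem_ofPred_eq]
        rcases h1.2 with h | h
        · exact hmid a b h1.1 h
        · rw [Sym2.eq_swap]
          exact hmid b a h1.symm.1 h
      · exact absurd h1 h2
  refine (Set.ncard_le_ncard hsub (Finset.finite_toSet _)).trans ?_
  rw [Set.ncard_coe_finset]
  exact Finset.card_image_le

/-- For every `n ≥ 1`, the path graph on `n` vertices has a growth
schedule (with edge-activation distance `d = 2`) of `⌈log₂ n⌉` slots that uses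
at most `n - 1` excess edges. -/
theorem path_growth_schedule (n : ℕ) (hn : 1 ≤ n) :
    ∃ S : GrowthSchedule (SimpleGraph.pathGraph n) 2 (Nat.clog 2 n),
      S.excess ≤ n - 1 := by
  have hk : n ≤ 2 ^ Nat.clog 2 n := Nat.le_pow_clog one_lt_two n
  generalize Nat.clog 2 n = k at hk ⊢
  refine ⟨pathSchedule n k hn hk, ?_⟩
  calc (pathSchedule n k hn hk).excess
      ≤ ∑ t ∈ Finset.range k,
          (Finset.univ.filter fun v : Fin n => slot k v.val = t + 1).card :=
        Finset.sum_le_sum fun t ht => ncard_deleted_le n k t (Finset.mem_range.1 ht)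
    _ = ((Finset.range k).biUnion fun t =>
          Finset.univ.filter fun v : Fin n => slot k v.val = t + 1).card := by
        refine (Finset.card_biUnion fun t _ t' _ htt' => ?_).symm
        refine Finset.disjoint_left.2 fun v hv hv' => htt' ?_
        simp only [Finset.mem_filter] at hv hv'
        omega
    _ ≤ (Finset.univ.erase (⟨0, hn⟩ : Fin n)).card := by
        refine Finset.card_le_card fun v hv => ?_
        simp only [Finset.mem_biUnion, Finset.mem_filter] at hv
        obtain ⟨t, -, -, hv⟩ := hv
        refine Finset.mem_erase.2 ⟨?_, Finset.mem_univ v⟩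
        rintro rfl
        rw [(slot_eq_zero_iff hk hn).2 rfl] at hv
        omega
    _ = n - 1 := by simp
end

section
/- For edge-activation distance d = 1, every graph that is grown by a growth schedule is a tree; that is, if a simple graph G is the final graph G_k of a growth schedule with d = 1, then G is a tree. -/
/-!
When `d = 1`, a new vertex may only be joined to vertices at distance `0` from its parent, that is,
to the parent itself. So every edge ever present is of the form `{v, parent v}` with `v` not the
initiator (`GrowthSchedule.adj_eq_parent`), which leaves room for at most `|V| - 1` edges
(`GrowthSchedule.card_edgeSet_lt`). A connected graph on `V` has at least `|V| - 1` edges, with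
equality exactly for trees, and the final graph is connected by definition of a schedule.
-/

open SimpleGraph

theorem GrowthSchedule.adj_eq_parent {V : Type*} [Fintype V] [DecidableEq V]
    {G : SimpleGraph V} {k : ℕ} (S : GrowthSchedule G 1 k) (t : ℕ) :
    ∀ v w, (S.graph t).Adj v w →
      (S.born v ≠ 0 ∧ w = S.parent v) ∨ (S.born w ≠ 0 ∧ v = S.parent w) := by
  induction t with
  | zero =>
    intro v w h
    rw [S.graph_zero] at h
    exact h.elim
  | succ t ih =>
    intro v w h
    by_cases hold : (S.graph t).Adj v w
    · exact ih v w hold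
    -- `dist` is also `0` between disconnected vertices; reachability excludes that case.
    have eq_of_dist : ∀ a b, (S.graph t).Reachable a b ∧ (S.graph t).dist a b ≤ 1 - 1 → b = a :=
      fun a b hab => (hab.1.dist_eq_zero_iff.mp (Nat.le_zero.mp hab.2)).symm
    rcases S.new_edges t v w (S.graph_le_mid t h) hold with ⟨hb, -, hp⟩ | ⟨hb, -, hp⟩
    · exact Or.inl ⟨by omega, hp.elim id (eq_of_dist _ _)⟩
    · exact Or.inr ⟨by omega, hp.elim id (eq_of_dist _ _)⟩

/-- The edges are covered by the map `v ↦ {v, parent v}` on the vertices other than the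
initiator. -/
theorem GrowthSchedule.card_edgeSet_lt {V : Type*} [Fintype V] [DecidableEq V]
    {G : SimpleGraph V} {k : ℕ} (S : GrowthSchedule G 1 k) :
    Nat.card G.edgeSet + 1 ≤ Nat.card V := by
  obtain ⟨r, hr, -⟩ := S.init_unique
  have hsub : G.edgeSet ⊆ (fun v => s(v, S.parent v)) '' ({r}ᶜ : Set V) := by
    intro e
    induction e using Sym2.ind with
    | _ v w =>
      intro he
      have hadj : (S.graph k).Adj v w := by
        rw [S.graph_final]
        exact he
      rcases S.adj_eq_parent k v w hadj with ⟨hb, rfl⟩ | ⟨hb, rfl⟩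
      · exact ⟨v, fun h => hb (h ▸ hr), rfl⟩
      · exact ⟨w, fun h => hb (h ▸ hr), Sym2.eq_swap⟩
  have h1 := (Set.ncard_le_ncard hsub).trans Set.ncard_image_le
  have h2 := Set.ncard_add_ncard_compl ({r} : Set V)
  rw [Set.ncard_singleton] at h2
  rw [Nat.card_coe_set_eq]
  omega

/-- For edge-activation distance `d = 1`, every graph grown by a
growth schedule is a tree. -/
theorem grown_with_d1_is_tree {V : Type*} [Fintype V] [DecidableEq V]
    (G : SimpleGraph V) (k : ℕ) (S : GrowthSchedule G 1 k) : G.IsTree := by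
  obtain ⟨r, -, -⟩ := S.init_unique
  have hconn : G.Connected :=
    { preconnected := fun v w => by
        have h := S.connected k v w (S.born_le v) (S.born_le w)
        rwa [S.graph_final] at h
      nonempty := ⟨r⟩ }
  exact isTree_iff_connected_and_card.mpr
    ⟨hconn, le_antisymm S.card_edgeSet_lt hconn.card_vert_le_card_edgeSet_add_one⟩
end

section
/- For edge-activation distance d = 1 and every n ≥ 2, the minimum number of slots of a growth schedule for the path graph on n vertices equals ⌈n/2⌉; that is, the path on n vertices has a d = 1 growth schedule of ⌈n/2⌉ slots, and every d = 1 growth schedule for it has at least ⌈n/2⌉ slots. -/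
/-!
With `d = 1` every edge that ever appears joins a vertex to its parent, since the only other
edges allowed join a new vertex to something at distance `0` from its parent. In the final path
all `n - 1` edges are therefore parent edges; starting at the initiator `r` and walking towards
either end, each vertex must be the parent of the next one (`parent_succ`, `parent_pred`). So
birth slots strictly increase away from `r`, and by `parent_inj` the two neighbours of `r` are not
born in the same slot. Hence the births of the two ends add up to at least `n` if `r` is an interior
vertex, and the birth of the far end is at least `n - 1 ≥ n / 2` if `r` is an end (`lower_bound`).

Conversely, the path can grow by one vertex at each end in every slot but the first, in which only
one vertex can be added, so `⌈n/2⌉` slots suffice (`balancedSchedule`).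
-/

open SimpleGraph

/-- The birth slot in the balanced schedule with initiator `r`: the right arm starts in slot `1`
and the left arm in slot `2`. -/
def balancedBorn (r v : ℕ) : ℕ := if r ≤ v then v - r else r - v + 1

/-- The parent in the balanced schedule: the neighbour one step closer to `r` (and `r` itself for
the initiator). -/
def balancedParent {n : ℕ} (r : ℕ) (hr : r < n) (v : Fin n) : Fin n :=
  if h : v.val < r then ⟨v.val + 1, by omega⟩ else
    if r < v.val then ⟨v.val - 1, by omega⟩ else v

/-- The path edges whose two ends are born by slot `t`. -/
def balancedGraph (n r t : ℕ) : SimpleGraph (Fin n) where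
  Adj v w := (v.val + 1 = w.val ∨ w.val + 1 = v.val) ∧
    balancedBorn r v ≤ t ∧ balancedBorn r w ≤ t
  symm := ⟨fun v w h => ⟨h.1.symm, h.2.2, h.2.1⟩⟩
  loopless := ⟨fun v h => by have := h.1; omega⟩

lemma balancedParent_val {n : ℕ} (r : ℕ) (hr : r < n) (v : Fin n) :
    (balancedParent r hr v).val =
      if v.val < r then v.val + 1 else if r < v.val then v.val - 1 else v.val := by
  unfold balancedParent; split_ifs <;> rfl

lemma balancedGraph_reachable_root {n r : ℕ} (hr : r < n) (t : ℕ) (m : ℕ) :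
    ∀ v : Fin n, balancedBorn r v = m → m ≤ t →
      (balancedGraph n r t).Reachable v ⟨r, hr⟩ := by
  induction m using Nat.strong_induction_on with
  | _ m ih =>
    intro v hv hm
    by_cases hvr : v.val = r
    · have : v = ⟨r, hr⟩ := Fin.ext hvr
      rw [this]
    · have hp := balancedParent_val r hr v
      have hlt : balancedBorn r (balancedParent r hr v) < m := by
        rw [hp, ← hv]; unfold balancedBorn; split_ifs <;> omega
      have hadj : (balancedGraph n r t).Adj v (balancedParent r hr v) := by
        refine ⟨?_, by omega, by omega⟩
        rw [hp]; split_ifs <;> omega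
      exact hadj.reachable.trans (ih _ hlt _ rfl (by omega))

/-- The schedule that keeps the initiator in the middle. No edge is ever deleted, so the
intermediate graphs coincide with the final ones of their slots. -/
def balancedSchedule (n k r : ℕ) (hr : r < n) (h₁ : r + 1 ≤ k) (h₂ : n ≤ k + r + 1) :
    GrowthSchedule (SimpleGraph.pathGraph n) 1 k where
  born v := balancedBorn r v
  parent := balancedParent r hr
  graph := balancedGraph n r
  mid := balancedGraph n r
  born_le v := by unfold balancedBorn; split_ifs <;> omega
  init_unique := by
    refine ⟨⟨r, hr⟩, by simp [balancedBorn], fun v hv => Fin.ext ?_⟩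
    simp only [balancedBorn] at hv ⊢
    split_ifs at hv; omega
  parent_born v hv := by
    rw [balancedParent_val]
    simp only [balancedBorn] at hv ⊢
    grind
  parent_inj v w hv hvw hp := by
    have hp' := congrArg Fin.val hp
    simp only [balancedParent_val] at hp'
    simp only [balancedBorn] at hv hvw
    apply Fin.ext
    grind
  graph_zero := by
    ext v w
    simp only [balancedGraph, balancedBorn, SimpleGraph.bot_adj]
    grind
  graph_final := by
    ext v w
    rw [SimpleGraph.pathGraph_adj]
    simp only [balancedGraph, balancedBorn]
    have := v.2
    have := w.2
    grind
  keep_le_mid t v w h := ⟨h.1, by have := h.2.1; omega, by have := h.2.2; omega⟩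
  parent_edge v hv := by
    simp only [balancedGraph, balancedParent_val]
    simp only [balancedBorn] at hv ⊢
    grind
  new_edges t v w h h' := by
    simp only [balancedGraph, Fin.ext_iff, balancedParent_val] at h h' ⊢
    simp only [balancedBorn] at h h' ⊢
    grind
  graph_le_mid t := le_rfl
  connected t v w hv hw :=
    (balancedGraph_reachable_root hr t _ v rfl hv).trans
      (balancedGraph_reachable_root hr t _ w rfl hw).symm

/-- For `d = 1` every edge present at any time joins a non-initiator to its parent. -/
lemma adj_parent {V : Type*} [Fintype V] [DecidableEq V] {G : SimpleGraph V} {k : ℕ}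
    (S : GrowthSchedule G 1 k) (t : ℕ) : ∀ v w, (S.graph t).Adj v w →
      (S.born v ≠ 0 ∧ S.parent v = w) ∨ (S.born w ≠ 0 ∧ S.parent w = v) := by
  induction t with
  | zero => intro v w h; rw [S.graph_zero] at h; exact h.elim
  | succ t ih =>
    intro v w h
    by_cases h' : (S.graph t).Adj v w
    · exact ih v w h'
    · rcases S.new_edges t v w (S.graph_le_mid t h) h' with ⟨hb, -, hp⟩ | ⟨hb, -, hp⟩
      · refine Or.inl ⟨by omega, ?_⟩
        rcases hp with hp | ⟨hr, hd⟩
        · exact hp.symm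
        · exact hr.dist_eq_zero_iff.1 (by omega)
      · refine Or.inr ⟨by omega, ?_⟩
        rcases hp with hp | ⟨hr, hd⟩
        · exact hp.symm
        · exact hr.dist_eq_zero_iff.1 (by omega)

section LowerBound

variable {n k : ℕ} (S : GrowthSchedule (SimpleGraph.pathGraph n) 1 k)

lemma path_edge_parent (i : ℕ) (hi : i + 1 < n) :
    (S.born ⟨i, by omega⟩ ≠ 0 ∧ S.parent ⟨i, by omega⟩ = ⟨i + 1, hi⟩) ∨
      (S.born ⟨i + 1, hi⟩ ≠ 0 ∧ S.parent ⟨i + 1, hi⟩ = ⟨i, by omega⟩) := by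
  apply adj_parent S k
  rw [S.graph_final, SimpleGraph.pathGraph_adj]
  exact Or.inl rfl

/-- To the right of the initiator, parents are left neighbours. -/
lemma parent_succ {r : Fin n} (hr : S.born r = 0) (j : ℕ) :
    ∀ h : r.val + j + 1 < n, S.born ⟨r.val + j + 1, h⟩ ≠ 0 ∧
      S.parent ⟨r.val + j + 1, h⟩ = ⟨r.val + j, by omega⟩ := by
  induction j with
  | zero =>
    intro h
    rcases path_edge_parent S r.val h with h' | h'
    · exact absurd hr h'.1
    · exact h'
  | succ j ih =>
    intro h
    rcases path_edge_parent S (r.val + (j + 1)) h with h' | h'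
    · have h₁ := (ih (by omega)).2.symm.trans h'.2
      simp only [Fin.mk.injEq] at h₁
      omega
    · exact h'

/-- To the left of the initiator, parents are right neighbours. -/
lemma parent_pred {r : Fin n} (hr : S.born r = 0) (j : ℕ) :
    ∀ i : ℕ, ∀ h : i + j + 1 = r.val, S.born ⟨i, by omega⟩ ≠ 0 ∧
      S.parent ⟨i, by omega⟩ = ⟨i + 1, by omega⟩ := by
  induction j with
  | zero =>
    intro i h
    rcases path_edge_parent S i (by omega) with h' | h'
    · exact h'
    · have : (⟨i + 1, by omega⟩ : Fin n) = r := Fin.ext h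
      exact absurd (by rw [this]; exact hr) h'.1
  | succ j ih =>
    intro i h
    rcases path_edge_parent S i (by omega) with h' | h'
    · exact h'
    · have h₁ := (ih (i + 1) (by omega)).2.symm.trans h'.2
      simp only [Fin.mk.injEq] at h₁
      omega

lemma born_right {r : Fin n} (hr : S.born r = 0) (h₀ : r.val + 1 < n) (j : ℕ) :
    ∀ h : r.val + j + 1 < n,
      S.born ⟨r.val + 1, h₀⟩ + j ≤ S.born ⟨r.val + j + 1, h⟩ := by
  induction j with
  | zero => intro h; exact le_rfl
  | succ j ih =>
    intro h
    obtain ⟨hb, hp⟩ := parent_succ S hr (j + 1) h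
    have h₁ := S.parent_born _ hb
    rw [hp] at h₁
    have h₂ := ih (by omega)
    change _ < _ at h₁
    have h₃ : S.born ⟨r.val + (j + 1), by omega⟩ = S.born ⟨r.val + j + 1, by omega⟩ := rfl
    omega

lemma born_left {r : Fin n} (hr : S.born r = 0) (h₀ : 1 ≤ r.val) (j : ℕ) :
    ∀ i : ℕ, ∀ h : i + j + 1 = r.val,
      S.born ⟨r.val - 1, by omega⟩ + j ≤ S.born ⟨i, by omega⟩ := by
  induction j with
  | zero =>
    intro i h
    have : (⟨r.val - 1, by omega⟩ : Fin n) = ⟨i, by omega⟩ := Fin.ext (by simp only; omega)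
    rw [this]; exact le_rfl
  | succ j ih =>
    intro i h
    obtain ⟨hb, hp⟩ := parent_pred S hr (j + 1) i h
    have h₁ := S.parent_born _ hb
    rw [hp] at h₁
    have h₂ := ih (i + 1) (by omega)
    omega

/-- If the initiator is interior, its two neighbours are born in different positive slots, so the
births of the two ends sum to at least `(n - 3) + (1 + 2) = n`. -/
lemma lower_bound {n k : ℕ} (S : GrowthSchedule (SimpleGraph.pathGraph n) 1 k) (hn : 2 ≤ n) : n ≤ 2 * k := by
  obtain ⟨r, hr, -⟩ := S.init_unique
  have hrn := r.2
  have right (h : r.val + 1 < n) : S.born ⟨r.val + 1, h⟩ + (n - r.val - 2) ≤ k :=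
    (born_right S hr h (n - r.val - 2) (by omega)).trans (S.born_le _)
  have left (h : 1 ≤ r.val) : S.born ⟨r.val - 1, by omega⟩ + (r.val - 1) ≤ k :=
    (born_left S hr h (r.val - 1) 0 (by omega)).trans (S.born_le _)
  have rpos (h : r.val + 1 < n) := parent_succ S hr 0 h
  have lpos (h : 1 ≤ r.val) := parent_pred S hr 0 (r.val - 1) (by omega)
  by_cases h₁ : r.val + 1 < n
  · have hR := right h₁
    obtain ⟨hR₁, hR₂⟩ := rpos h₁
    change S.born ⟨r.val + 1, h₁⟩ ≠ 0 at hR₁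
    by_cases h₂ : 1 ≤ r.val
    · have hL := left h₂
      obtain ⟨hL₁, hL₂⟩ := lpos h₂
      have hne : S.born ⟨r.val + 1, h₁⟩ ≠ S.born ⟨r.val - 1, by omega⟩ := by
        intro he
        have h := S.parent_inj _ _ hR₁ he
          (hR₂.trans ((Fin.ext (by simp only; omega)).trans hL₂.symm))
        simp only [Fin.mk.injEq] at h
        omega
      omega
    · omega
  · have hL := left (by omega)
    have hL₁ := (lpos (by omega)).1
    omega

end LowerBound

/-- For `d = 1` and `n ≥ 2`, the minimum number of slots of a
growth schedule for the path graph on `n` vertices equals `⌈n/2⌉`. -/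
theorem path_d1_min_slots (n : ℕ) (hn : 2 ≤ n) :
    Nonempty (GrowthSchedule (SimpleGraph.pathGraph n) 1 ((n + 1) / 2)) ∧
    ∀ k : ℕ, GrowthSchedule (SimpleGraph.pathGraph n) 1 k → (n + 1) / 2 ≤ k := by
  refine ⟨⟨balancedSchedule n _ ((n + 1) / 2 - 1) (by omega) (by omega) (by omega)⟩, ?_⟩
  intro k S
  have := lower_bound S hn
  omega
end

section
/- For edge-activation distance d = 1, if G is a tree with diameter diam, then every growth schedule for G has at least ⌈diam/2⌉ slots. -/
/-!
For `d = 1` a vertex can only be joined, when it is generated, to the vertex it was generated for.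
Hence every edge of every grown graph is of the form `{v, parent v}` (`graph_adj_imp`).
Conversely each such edge survives in `G`: it is the only edge that can lead out of the set of
descendants of `v`, and `G` is connected (`adj_parent`). Since `born` strictly decreases along
`parent`, the parent chain of `v` is a walk in `G` to the initiator of length at most
`born v ≤ k`, so any two vertices are at distance at most `2 * k`.
-/

open SimpleGraph

namespace GrowthSchedule

variable {V : Type*} [Fintype V] [DecidableEq V] {G : SimpleGraph V} {k : ℕ}

/-- `S.Step a b`: the vertex `a` is not the initiator and was generated for `b`. -/
def Step (S : GrowthSchedule G 1 k) (a b : V) : Prop :=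
  S.born a ≠ 0 ∧ b = S.parent a

/-- Every edge of a grown graph joins a vertex to the vertex it was generated for: a new edge to
`w` needs `dist (parent v) w ≤ 1 - 1 = 0`, where reachability excludes the junk value of `dist`. -/
lemma graph_adj_imp (S : GrowthSchedule G 1 k) (t : ℕ) :
    ∀ v w, (S.graph t).Adj v w → S.Step v w ∨ S.Step w v := by
  induction t with
  | zero =>
    intro v w h
    rw [S.graph_zero] at h
    exact h.elim
  | succ t ih =>
    intro v w h
    by_cases h' : (S.graph t).Adj v w
    · exact ih v w h'
    · rcases S.new_edges t v w (S.graph_le_mid t h) h' with ⟨hb, -, hw⟩ | ⟨hb, -, hv⟩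
      · refine Or.inl ⟨by omega, ?_⟩
        rcases hw with hw | ⟨hr, hd⟩
        · exact hw
        · exact (hr.dist_eq_zero_iff.1 (by omega)).symm
      · refine Or.inr ⟨by omega, ?_⟩
        rcases hv with hv | ⟨hr, hd⟩
        · exact hv
        · exact (hr.dist_eq_zero_iff.1 (by omega)).symm

lemma reachable (S : GrowthSchedule G 1 k) (v w : V) : G.Reachable v w := by
  have h := S.connected k v w (S.born_le v) (S.born_le w)
  rwa [S.graph_final] at h

lemma adj_parent (S : GrowthSchedule G 1 k) {v : V} (hv : S.born v ≠ 0) :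
    G.Adj v (S.parent v) := by
  obtain ⟨r, hr, -⟩ := S.init_unique
  obtain ⟨p⟩ := S.reachable v r
  have hrD : r ∉ {w | Relation.ReflTransGen S.Step w v} := by
    intro h
    rcases Relation.ReflTransGen.cases_head h with rfl | ⟨c, hc, -⟩
    · exact hv hr
    · exact hc.1 hr
  -- A walk from `v` to the initiator has to leave the set of descendants of `v`.
  obtain ⟨d, -, ha, hb⟩ := p.exists_boundary_dart
    {w | Relation.ReflTransGen S.Step w v} Relation.ReflTransGen.refl hrD
  have hadj : G.Adj d.fst d.snd := d.adj
  have hstep := S.graph_adj_imp k d.fst d.snd (by rw [S.graph_final]; exact hadj)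
  rcases hstep with h | h
  · rcases Relation.ReflTransGen.cases_head ha with hav | ⟨c, hc, hcv⟩
    · rw [h.2, hav] at hadj
      exact hadj
    · refine absurd ?_ hb
      change Relation.ReflTransGen S.Step d.snd v
      rw [h.2, ← hc.2]
      exact hcv
  · exact absurd (Relation.ReflTransGen.head h ha) hb

lemma dist_init_le (S : GrowthSchedule G 1 k) {r : V} (hr : S.born r = 0) (n : ℕ) :
    ∀ v, S.born v ≤ n → G.dist v r ≤ n := by
  induction n with
  | zero =>
    intro v hv
    rw [S.init_unique.unique (Nat.le_zero.1 hv) hr, SimpleGraph.dist_self]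
  | succ n ih =>
    intro v hv
    by_cases h0 : S.born v = 0
    · exact (ih v (by omega)).trans n.le_succ
    · have hp := S.parent_born v h0
      have h1 := ih (S.parent v) (by omega)
      obtain ⟨p, hpl⟩ := (S.reachable (S.parent v) r).exists_walk_length_eq_dist
      have h2 := SimpleGraph.dist_le (SimpleGraph.Walk.cons (S.adj_parent h0) p)
      rw [SimpleGraph.Walk.length_cons] at h2
      omega

end GrowthSchedule

/-- For `d = 1`, if `G` is a tree with diameter `diam`, then every
growth schedule for `G` has at least `⌈diam/2⌉` slots. -/
theorem tree_d1_slots_ge_half_diam {V : Type*} [Fintype V] [DecidableEq V]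
    (G : SimpleGraph V) (hG : G.IsTree) (k : ℕ) (S : GrowthSchedule G 1 k) :
    (G.diam + 1) / 2 ≤ k := by
  obtain ⟨r, hr, -⟩ := S.init_unique
  have : Nonempty V := ⟨r⟩
  obtain ⟨u, v, huv⟩ := G.exists_dist_eq_diam
  have hu := S.dist_init_le hr k u (S.born_le u)
  have hv := S.dist_init_le hr k v (S.born_le v)
  have htri : G.dist u v ≤ G.dist u r + G.dist r v := hG.connected.dist_triangle
  rw [SimpleGraph.dist_comm (u := r)] at htri
  omega
end

section
/- For edge-activation distance d = 1, if G is a tree with maximum degree Δ(G), then every growth schedule for G has at least Δ(G) slots. -/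
/-!
For `d = 1` the only vertex at distance at most `d - 1 = 0` from the parent of a new vertex is that
parent itself, so every edge ever present joins a vertex to its parent (`adj_graph_parent`).
Hence the neighbours of a vertex `x` in the target graph are its possible parent and some of the
vertices generated for it. The latter are generated in pairwise distinct slots later than that of
`x`; charging the parent of `x` to the slot in which `x` itself was generated, the map
`w ↦ max (born w) (born x)` embeds the neighbourhood of `x` into the slots `1, …, k`.
The bound thus holds for every target graph.
-/

open SimpleGraph

/-- With edge-activation distance `1`, every edge of every intermediate graph is a parent edge. -/
theorem GrowthSchedule.adj_graph_parent {V : Type*} [Fintype V] [DecidableEq V]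
    {G : SimpleGraph V} {k : ℕ} (S : GrowthSchedule G 1 k) (t : ℕ) {v w : V}
    (h : (S.graph t).Adj v w) :
    (S.born v ≠ 0 ∧ w = S.parent v) ∨ (S.born w ≠ 0 ∧ v = S.parent w) := by
  induction t with
  | zero => simp [S.graph_zero] at h
  | succ t ih =>
    by_cases hold : (S.graph t).Adj v w
    · exact ih hold
    · rcases S.new_edges t v w (S.graph_le_mid t h) hold with
        ⟨hb, -, hp | ⟨hr, hd⟩⟩ | ⟨hb, -, hp | ⟨hr, hd⟩⟩
      · exact .inl ⟨by omega, hp⟩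
      · exact .inl ⟨by omega, (hr.dist_eq_zero_iff.mp (by omega)).symm⟩
      · exact .inr ⟨by omega, hp⟩
      · exact .inr ⟨by omega, (hr.dist_eq_zero_iff.mp (by omega)).symm⟩

/-- For `d = 1`, if `G` is a tree with maximum degree `Δ(G)`, then
every growth schedule for `G` has at least `Δ(G)` slots. -/
theorem tree_d1_slots_ge_maxDegree {V : Type*} [Fintype V] [DecidableEq V]
    (G : SimpleGraph V) [DecidableRel G.Adj] (hG : G.IsTree)
    (k : ℕ) (S : GrowthSchedule G 1 k) :
    G.maxDegree ≤ k := by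
  refine G.maxDegree_le_of_forall_degree_le k fun x => ?_
  have key : ∀ w, G.Adj x w →
      (S.born w < S.born x ∧ w = S.parent x) ∨ (S.born x < S.born w ∧ S.parent w = x) := by
    intro w hw
    rw [← S.graph_final] at hw
    rcases S.adj_graph_parent k hw with ⟨hb, hp⟩ | ⟨hb, hp⟩
    · exact .inl ⟨hp ▸ S.parent_born x hb, hp⟩
    · exact .inr ⟨hp ▸ S.parent_born w hb, hp.symm⟩
  have hcard : (G.neighborFinset x).card ≤ (Finset.Icc 1 k).card := by
    refine Finset.card_le_card_of_injOn (fun w => max (S.born w) (S.born x)) ?_ ?_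
    · intro w hw
      have h := key w (by simpa using hw)
      have h₁ := S.born_le w
      have h₂ := S.born_le x
      simp only [Finset.coe_Icc, Set.mem_Icc]
      omega
    · intro v hv w hw hvw
      simp only at hvw
      rcases key v (by simpa using hv) with ⟨hv₁, hv₂⟩ | ⟨hv₁, hv₂⟩ <;>
        rcases key w (by simpa using hw) with ⟨hw₁, hw₂⟩ | ⟨hw₁, hw₂⟩
      · exact hv₂.trans hw₂.symm
      · omega
      · omega
      · exact S.parent_inj v w (by omega) (by omega) (hv₂.trans hw₂.symm)
  simpa using hcard
end

section
/- In any growth schedule (with edge-activation distance d = 2) for a target graph G, and for any slot t, the set of vertices generated in slot t forms an independent set in the target graph G; in particular, no two vertices generated in the same slot are adjacent in G. -/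
open SimpleGraph

/-- No graph of the schedule joins two vertices of the same slot: an edge that is new in some slot
has exactly one endpoint generated in that slot, the other being older, and every other edge is
inherited from the previous graph, back to the edgeless graph of slot `0`. -/
theorem GrowthSchedule.not_adj_of_born_eq {V : Type*} [Fintype V] [DecidableEq V]
    {G : SimpleGraph V} {d k : ℕ} (S : GrowthSchedule G d k) {v w : V}
    (h : S.born v = S.born w) (s : ℕ) : ¬ (S.graph s).Adj v w := by
  induction s with
  | zero => simp [S.graph_zero]
  | succ s ih =>
    intro hadj
    rcases S.new_edges s v w (S.graph_le_mid s hadj) ih with ⟨h1, h2, -⟩ | ⟨h1, h2, -⟩ <;> omega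

/-- In any growth schedule (with `d = 2`) for a target graph `G`,
the set of vertices generated in any fixed slot forms an independent set in `G`. -/
theorem same_slot_independent {V : Type*} [Fintype V] [DecidableEq V]
    {G : SimpleGraph V} {k : ℕ} (S : GrowthSchedule G 2 k)
    (t : ℕ) (v w : V) (hv : S.born v = t) (hw : S.born w = t) (hvw : v ≠ w) :
    ¬ G.Adj v w := by
  -- The target graph is the final graph of the schedule.
  rw [← S.graph_final]
  exact S.not_adj_of_born_eq (hv.trans hw.symm) k
end

section
/- If a graph G has a growth schedule (with edge-activation distance d = 2) of k slots, then k ≥ χ(G) − 1, where χ(G) is the chromatic number of G. (The vertices generated in each of the k slots form an independent set of G, and together with the singleton class of the initiator they yield a proper coloring of G with at most k + 1 colors.) -/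
open SimpleGraph

/-- Every edge of every intermediate graph joins vertices of different slots: an edge activated in
slot `t + 1` has one endpoint born in that slot and the other born before it. In particular the
vertices generated in one slot are independent. -/
theorem GrowthSchedule.born_ne_of_adj {V : Type*} [Fintype V] [DecidableEq V]
    {G : SimpleGraph V} {d k : ℕ} (S : GrowthSchedule G d k) (t : ℕ) {v w : V}
    (h : (S.graph t).Adj v w) : S.born v ≠ S.born w := by
  induction t with
  | zero => simp [S.graph_zero] at h
  | succ t ih =>
    by_cases hold : (S.graph t).Adj v w
    · exact ih hold
    · rcases S.new_edges t v w (S.graph_le_mid t h) hold with ⟨h₁, h₂, -⟩ | ⟨h₁, h₂, -⟩ <;> omega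

/-- If a graph `G` has a growth schedule (with `d = 2`) of `k`
slots, then `k ≥ χ(G) - 1`, i.e. `χ(G) ≤ k + 1`. -/
theorem slots_ge_chromatic_number {V : Type*} [Fintype V] [DecidableEq V]
    {G : SimpleGraph V} {k : ℕ} (S : GrowthSchedule G 2 k) :
    G.chromaticNumber ≤ (k : ℕ∞) + 1 := by
  -- The birth slot, one of `0, …, k`, is a proper coloring with `k + 1` colors.
  have hcol : G.Colorable (k + 1) :=
    ⟨Coloring.mk (fun v => (⟨S.born v, Nat.lt_succ_of_le (S.born_le v)⟩ : Fin (k + 1)))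
      fun {v w} h heq =>
        S.born_ne_of_adj k (S.graph_final.symm ▸ h : (S.graph k).Adj v w) (congrArg Fin.val heq)⟩
  exact_mod_cast hcol.chromaticNumber_le
end

section
/- Let G be a graph and let v be a candidate vertex of G (i.e., there exists w ≠ v with N_G[v] ⊆ N_G[w]). Then G has a candidate elimination ordering if and only if the graph G − v obtained by deleting v and its incident edges has a candidate elimination ordering. -/
/-!
A graph has a candidate elimination ordering iff it can be dismantled: candidate vertices can be
removed one at a time until at most one vertex is left (`hasCEO_iff`). That notion is studied as an
inductive predicate `Dism G s` on the finite vertex sets `s` of a fixed graph.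

If `G - v` is dismantlable, then so is `G`: remove `v` first. The converse is `Dism.erase`, by
induction on a dismantling of `s`. Suppose it starts with `u`, where `N[u] ⊆ N[u']`, and let
`N[v] ⊆ N[w]`. Unless `u = v`, or `u` and `v` are twins (`N[u] = N[v]`), transitivity of
domination lets `w ≠ u` be chosen, so `v` is still a candidate in `s - u` and `u` is still one in
`s - v`; by induction `s - u - v` is dismantlable, hence so is `s - v`. If `u` and `v` are twins,
exchanging them is an isomorphism from `s - u` to `s - v`, and dismantlability is invariant under
isomorphism (`Dism.image`).
-/

open SimpleGraph

/-- `v` is a candidate vertex of the subgraph of `H` induced by the set `s`: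
some other vertex `w` of `s` satisfies `N[v] ⊆ N[w]` within `s`. -/
def CandidateIn {V : Type*} (H : SimpleGraph V) (s : Set V) (v : V) : Prop :=
  ∃ w ∈ s, w ≠ v ∧ ∀ x ∈ s, (x = v ∨ H.Adj v x) → (x = w ∨ H.Adj w x)

/-- `H` has a candidate elimination ordering `v₁, …, vₙ` of its vertices: each
`vᵢ` (with `i ≤ n - 1`) is a candidate vertex of the subgraph induced by
`{vᵢ, …, vₙ}`. -/
def HasCEO {V : Type*} [Fintype V] (H : SimpleGraph V) : Prop :=
  ∃ e : Fin (Fintype.card V) ≃ V, ∀ i : Fin (Fintype.card V),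
    (i : ℕ) < Fintype.card V - 1 →
    CandidateIn H {x | ∃ j, i ≤ j ∧ e j = x} (e i)

/-- `Dism G s`: the subgraph of `G` induced by `s` can be reduced to at most one vertex by
successively deleting candidate vertices. The empty set is included in the base case. -/
inductive Dism {V : Type*} [DecidableEq V] (G : SimpleGraph V) : Finset V → Prop
  | base (s : Finset V) (h : s.card ≤ 1) : Dism G s
  | step (s : Finset V) (v : V) (hv : v ∈ s) (hc : CandidateIn G (s : Set V) v)
      (h : Dism G (s.erase v)) : Dism G s

/-- Dismantlability is transported by maps that restrict to an isomorphism of induced subgraphs. -/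
lemma Dism.image {V W : Type*} [DecidableEq V] [DecidableEq W] {G : SimpleGraph V}
    {H : SimpleGraph W} {s : Finset V} (hs : Dism G s) (f : V → W)
    (hf : Set.InjOn f (s : Set V))
    (hadj : ∀ x ∈ s, ∀ y ∈ s, G.Adj x y ↔ H.Adj (f x) (f y)) : Dism H (s.image f) := by
  induction hs with
  | base s h => exact .base _ (Finset.card_image_le.trans h)
  | step s v hv hc h ih =>
    have key : (s.image f).erase (f v) = (s.erase v).image f := by
      ext y
      simp only [Finset.mem_erase, Finset.mem_image]
      constructor
      · rintro ⟨hy, x, hx, rfl⟩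
        exact ⟨x, ⟨fun e => hy (e ▸ rfl), hx⟩, rfl⟩
      · rintro ⟨x, ⟨hxv, hx⟩, rfl⟩
        exact ⟨fun e => hxv (hf hx hv e), x, hx, rfl⟩
    refine .step _ (f v) (Finset.mem_image_of_mem f hv) ?_ ?_
    · obtain ⟨w, hw, hwv, hN⟩ := hc
      refine ⟨f w, Finset.mem_coe.2 (Finset.mem_image_of_mem f hw),
        fun e => hwv (hf hw hv e), ?_⟩
      intro y hy hvy
      obtain ⟨x, hx, rfl⟩ := Finset.mem_image.1 (Finset.mem_coe.1 hy)
      have := hN x hx (hvy.imp (fun e => hf hx hv e) (fun a => (hadj v hv x hx).2 a))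
      exact this.imp (fun e => congrArg f e) (fun a => (hadj w hw x hx).1 a)
    · rw [key]
      exact ih (hf.mono (by simp)) fun x hx y hy =>
        hadj x (Finset.mem_of_mem_erase hx) y (Finset.mem_of_mem_erase hy)

/-- Dismantlability survives the deletion of an arbitrary candidate vertex. -/
lemma Dism.erase {V : Type*} [DecidableEq V] {G : SimpleGraph V} {s : Finset V}
    (hs : Dism G s) : ∀ v ∈ s, CandidateIn G (s : Set V) v → Dism G (s.erase v) := by
  induction hs with
  | base s h => exact fun v _ _ => .base _ (Finset.card_erase_le.trans h)
  | step s u hu hc h ih =>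
    intro v hv hcv
    by_cases huv : u = v
    · exact huv ▸ h
    obtain ⟨u', hu', hu'u, hNu⟩ := hc
    -- The non-twin case: `v` has a dominating vertex other than `u`.
    have main : ∀ w ∈ s, w ≠ v → w ≠ u →
        (∀ x ∈ s, (x = v ∨ G.Adj v x) → (x = w ∨ G.Adj w x)) → Dism G (s.erase v) := by
      intro w hw hwv hwu hN
      have h1 : Dism G ((s.erase u).erase v) := by
        refine ih v (Finset.mem_erase.2 ⟨Ne.symm huv, hv⟩)
          ⟨w, Finset.mem_coe.2 (Finset.mem_erase.2 ⟨hwu, hw⟩), hwv, fun x hx => ?_⟩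
        exact hN x (Finset.mem_of_mem_erase (Finset.mem_coe.1 hx))
      rw [Finset.erase_right_comm] at h1
      refine .step _ u (Finset.mem_erase.2 ⟨huv, hu⟩) ?_ h1
      by_cases hu'v : u' = v
      · subst hu'v
        refine ⟨w, Finset.mem_coe.2 (Finset.mem_erase.2 ⟨hwv, hw⟩), hwu, fun x hx hxu => ?_⟩
        have hx' := Finset.mem_of_mem_erase (Finset.mem_coe.1 hx)
        exact hN x hx' (hNu x hx' hxu)
      · exact ⟨u', Finset.mem_coe.2 (Finset.mem_erase.2 ⟨hu'v, hu'⟩), hu'u, fun x hx =>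
          hNu x (Finset.mem_of_mem_erase (Finset.mem_coe.1 hx))⟩
    obtain ⟨w, hw, hwv, hN⟩ := hcv
    by_cases hwu : w = u
    · subst hwu
      by_cases hu'v : u' = v
      · -- Here `w` and `v` are twins, and the map sending `v` to `w` exchanges them.
        subst hu'v
        have key : s.erase u' = (s.erase w).image (fun x => if x = u' then w else x) := by
          ext y
          simp only [Finset.mem_erase, Finset.mem_image]
          constructor
          · rintro ⟨hy, hys⟩
            by_cases hyw : y = w
            · exact ⟨u', ⟨hu'u, hu'⟩, by simp [hyw]⟩
            · exact ⟨y, ⟨hyw, hys⟩, by simp [hy]⟩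
          · rintro ⟨x, ⟨hxw, hx⟩, rfl⟩
            split_ifs with hxu
            · exact ⟨huv, hu⟩
            · exact ⟨hxu, hx⟩
        have twin : ∀ x ∈ s, x ≠ u' → x ≠ w → (G.Adj u' x ↔ G.Adj w x) := by
          intro x hx h1 h2
          exact ⟨fun a => (hN x hx (.inr a)).resolve_left h2,
            fun a => (hNu x hx (.inr a)).resolve_left h1⟩
        rw [key]
        refine h.image _ ?_ ?_
        · intro x hx y hy hxy
          have hx' := (Finset.mem_erase.1 (Finset.mem_coe.1 hx)).1
          have hy' := (Finset.mem_erase.1 (Finset.mem_coe.1 hy)).1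
          dsimp only at hxy
          split_ifs at hxy <;> simp_all
        · intro x hx y hy
          obtain ⟨hxw, hx⟩ := Finset.mem_erase.1 hx
          obtain ⟨hyw, hy⟩ := Finset.mem_erase.1 hy
          split_ifs with h1 h2 h2
          · subst h1; subst h2; simp
          · subst h1; exact twin y hy h2 hyw
          · subst h2; rw [G.adj_comm x y, G.adj_comm x w]; exact twin x hx h1 hxw
          · rfl
      · exact main u' hu' hu'v hu'u fun x hx hxv => hNu x hx (hN x hx hxv)
    · exact main w hw hwv hwu hN

/-- A dismantling of `s`, recorded as the position `r x` at which each `x ∈ s` is deleted. -/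
lemma Dism.exists_rank {V : Type*} [DecidableEq V] {G : SimpleGraph V} {s : Finset V}
    (hs : Dism G s) : ∃ r : V → ℕ, Set.InjOn r (s : Set V) ∧ (∀ x ∈ s, r x < s.card) ∧
      ∀ x ∈ s, r x + 1 < s.card → CandidateIn G {y | y ∈ s ∧ r x ≤ r y} x := by
  induction hs with
  | base s h =>
    refine ⟨fun _ => 0, ?_, fun x hx => Finset.card_pos.2 ⟨x, hx⟩, fun x _ hc => by omega⟩
    intro x hx y hy _
    exact Finset.card_le_one.1 h x hx y hy
  | step s v hv hc h ih =>
    obtain ⟨r, hinj, hlt, hcand⟩ := ih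
    have hcard := Finset.card_erase_add_one hv
    refine ⟨fun x => if x = v then 0 else r x + 1, ?_, ?_, ?_⟩
    · intro x hx y hy hxy
      dsimp only at hxy
      split_ifs at hxy with h1 h2 h2
      · rw [h1, h2]
      · exact hinj (Finset.mem_coe.2 (Finset.mem_erase.2 ⟨h1, hx⟩))
          (Finset.mem_coe.2 (Finset.mem_erase.2 ⟨h2, hy⟩)) (by omega)
    · intro x hx
      dsimp only
      split_ifs with h1
      · omega
      · have := hlt x (Finset.mem_erase.2 ⟨h1, hx⟩)
        omega
    · intro x hx hxc
      by_cases h1 : x = v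
      · subst h1
        have hset : {y | y ∈ s ∧ (if x = x then 0 else r x + 1) ≤ if y = x then 0 else r y + 1}
            = (s : Set V) := by
          ext y; simp
        rw [hset]; exact hc
      · have hset : {y | y ∈ s ∧ (if x = v then 0 else r x + 1) ≤ if y = v then 0 else r y + 1}
            = {y | y ∈ s.erase v ∧ r x ≤ r y} := by
          ext y
          by_cases h2 : y = v <;> simp [h1, h2]
        rw [hset]
        simp only [h1, if_false] at hxc
        exact hcand x (Finset.mem_erase.2 ⟨h1, hx⟩) (by omega)

lemma hasCEO_iff {V : Type*} [Fintype V] [DecidableEq V] (G : SimpleGraph V) :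
    HasCEO G ↔ Dism G Finset.univ := by
  constructor
  · rintro ⟨e, he⟩
    -- Downward induction along the ordering: every final segment is dismantlable.
    have key : ∀ k i : ℕ, i + k = Fintype.card V →
        Dism G (Finset.univ.filter fun x => i ≤ (e.symm x : ℕ)) := by
      intro k
      induction k with
      | zero =>
        intro i hi
        refine .base _ (Finset.card_le_one.2 fun x hx => ?_)
        have := (Finset.mem_filter.1 hx).2
        have := (e.symm x).2
        omega
      | succ k ih =>
        intro i hi
        by_cases hk : k = 0
        · refine .base _ (Finset.card_le_one.2 fun x hx y hy => ?_)
          have h1 := (Finset.mem_filter.1 hx).2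
          have h2 := (Finset.mem_filter.1 hy).2
          have h3 := (e.symm x).2
          have h4 := (e.symm y).2
          exact e.symm.injective (Fin.ext (by omega))
        have hin : i < Fintype.card V := by omega
        refine .step _ (e ⟨i, hin⟩) (by simp) ?_ ?_
        · have := he ⟨i, hin⟩ (show i < _ by omega)
          convert this using 1
          ext x
          simp only [Finset.coe_filter, Finset.mem_univ, true_and, Set.mem_ofPred_eq]
          constructor
          · exact fun h => ⟨e.symm x, h, by simp⟩
          · rintro ⟨j, hj, rfl⟩
            simpa [Fin.le_def] using hj
        · convert ih (i + 1) (by omega) using 1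
          ext x
          simp only [Finset.mem_erase, Finset.mem_filter, Finset.mem_univ, true_and, ne_eq,
            ← Equiv.symm_apply_eq, Fin.ext_iff]
          omega
    simpa using key (Fintype.card V) 0 (by simp)
  · intro h
    obtain ⟨r, hinj, hlt, hc⟩ := h.exists_rank
    have hlt' : ∀ x, r x < Fintype.card V := fun x => hlt x (Finset.mem_univ x)
    let f : V → Fin (Fintype.card V) := fun x => ⟨r x, hlt' x⟩
    have hf : Function.Bijective f := by
      rw [Fintype.bijective_iff_injective_and_card]
      refine ⟨fun x y hxy => hinj (by simp) (by simp) (Fin.ext_iff.1 hxy), by simp⟩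
    refine ⟨(Equiv.ofBijective f hf).symm, fun i hi => ?_⟩
    obtain ⟨x, rfl⟩ := hf.2 i
    have hx : (Equiv.ofBijective f hf).symm (f x) = x :=
      (Equiv.ofBijective f hf).symm_apply_apply x
    rw [hx]
    have hi' : r x < Fintype.card V - 1 := hi
    convert hc x (Finset.mem_univ x) (by rw [Finset.card_univ]; omega) using 1
    ext y
    simp only [Set.mem_ofPred_eq, Finset.mem_univ, true_and]
    constructor
    · rintro ⟨j, hj, hjy⟩
      rw [Equiv.symm_apply_eq] at hjy
      subst hjy
      exact hj
    · exact fun h => ⟨f y, h, (Equiv.ofBijective f hf).symm_apply_apply y⟩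

/-- If `v` is a candidate vertex of `G`, then `G` has a candidate
elimination ordering iff `G - v` has one. -/
theorem ceo_delete_candidate {V : Type*} [Fintype V] [DecidableEq V]
    (G : SimpleGraph V) (v : V) (hv : CandidateIn G Set.univ v) :
    HasCEO G ↔ HasCEO (G.induce {x | x ≠ v}) := by
  rw [hasCEO_iff, hasCEO_iff]
  have hv' : CandidateIn G ((Finset.univ : Finset V) : Set V) v := by simpa using hv
  constructor
  · intro h
    have h1 := h.erase v (Finset.mem_univ v) hv'
    obtain ⟨w, -, hwv, -⟩ := hv
    -- A left inverse of the inclusion; its value `w` at `v` plays no role.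
    let f : V → {x | x ≠ v} := fun x => if hx : x ≠ v then ⟨x, hx⟩ else ⟨w, hwv⟩
    have hf : ∀ x, x ≠ v → (f x : V) = x := fun x hx => by simp [f, hx]
    have h2 : Dism (G.induce {x | x ≠ v}) ((Finset.univ.erase v).image f) := by
      refine h1.image f ?_ ?_
      · intro x hx y hy hxy
        rw [← hf x (by simpa using hx), ← hf y (by simpa using hy), hxy]
      · intro x hx y hy
        rw [SimpleGraph.comap_adj]
        simp [hf x (by simpa using hx), hf y (by simpa using hy)]
    convert h2
    ext x
    simp only [Finset.mem_univ, true_iff, Finset.mem_image]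
    exact ⟨x, Finset.mem_erase.2 ⟨x.2, Finset.mem_univ _⟩, Subtype.ext (hf x x.2)⟩
  · intro h
    refine .step _ v (Finset.mem_univ v) hv' ?_
    have h1 : Dism G (Finset.univ.image (Subtype.val : {x | x ≠ v} → V)) :=
      h.image _ Subtype.val_injective.injOn (by simp)
    convert h1
    ext x
    simp
end
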